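/- arXiv:2308.13370 — 6 statements merged into one kernel-verified Lean document; each statement's English description precedes it below -/
import Mathlib

section
/- Let U ⊆ ℂ³ be a connected open set and P, Q, A₁, A₂ : U → ℂ holomorphic, with Q not identically zero and A₂ not identically zero on U. Assume the tangency identity x₂·Q·A₁ + P·A₂ = 0 holds on U (this is ω(X_{P,Q}) = 0 for ω with third coefficient A₃ ≡ 0), and assume the integrability identity for ω = (A₁, A₂, 0), namely A₂·∂₃A₁ − A₁·∂₃A₂ = 0 on U. Then Q·∂₃P − P·∂₃Q = 0 on U; i.e. the quotient P/Q does not depend on the variable x₃ wherever it is defined. -/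
/-- Partial derivative with respect to the first coordinate on ℂ³. -/
noncomputable def d1 (f : ℂ × ℂ × ℂ → ℂ) (p : ℂ × ℂ × ℂ) : ℂ :=
  deriv (fun z => f (z, p.2.1, p.2.2)) p.1

/-- Partial derivative with respect to the second coordinate on ℂ³. -/
noncomputable def d2 (f : ℂ × ℂ × ℂ → ℂ) (p : ℂ × ℂ × ℂ) : ℂ :=
  deriv (fun z => f (p.1, z, p.2.2)) p.2.1

/-- Partial derivative with respect to the third coordinate on ℂ³. -/
noncomputable def d3 (f : ℂ × ℂ × ℂ → ℂ) (p : ℂ × ℂ × ℂ) : ℂ :=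
  deriv (fun z => f (p.1, p.2.1, z)) p.2.2

/-- The coefficient of `ω ∧ dω` for `ω = A₁dx₁ + A₂dx₂ + A₃dx₃`; the integrability
condition `ω ∧ dω = 0` says this vanishes. -/
noncomputable def wedgeCoeff (A₁ A₂ A₃ : ℂ × ℂ × ℂ → ℂ) (p : ℂ × ℂ × ℂ) : ℂ :=
  A₁ p * (d2 A₃ p - d3 A₂ p) + A₂ p * (d3 A₁ p - d1 A₃ p) + A₃ p * (d1 A₂ p - d2 A₁ p)


open Set Filter Topology Metric

/-- The identity theorem for Fréchet-holomorphic functions on a preconnected open subset of a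
complex normed space, with no prior knowledge of analyticity in several variables. -/
theorem DifferentiableOn.eqOn_zero_of_isPreconnected_of_eventuallyEq_zero
    {E : Type*} [NormedAddCommGroup E] [NormedSpace ℂ E] {f : E → ℂ} {U : Set E}
    (hf : DifferentiableOn ℂ f U) (hU : IsOpen U) (hUc : IsPreconnected U) {x : E}
    (hx : x ∈ U) (hfx : f =ᶠ[𝓝 x] 0) : EqOn f 0 U := by
  have hsub : U ⊆ {y | f =ᶠ[𝓝 y] 0} := by
    refine hUc.subset_of_closure_inter_subset isOpen_setOfPred_eventually_nhds ⟨x, hx, hfx⟩ ?_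
    rintro y ⟨hy, hyU⟩
    obtain ⟨r, hr, hrU⟩ := Metric.isOpen_iff.mp hU y hyU
    obtain ⟨w, hw, hwy⟩ := Metric.mem_closure_iff.mp hy r hr
    filter_upwards [ball_mem_nhds y hr] with z hz
    let line : ℂ → E := fun t => w + t • (z - w)
    have hline : Differentiable ℂ line := by fun_prop
    let V : Set ℂ := line ⁻¹' ball y r
    have hV : IsOpen V := isOpen_ball.preimage hline.continuous
    have hVc : Convex ℝ V := by
      intro a ha b hb s t hs ht hst
      have h := convex_ball y r ha hb hs ht hst
      have heq : s • line a + t • line b = line (s • a + t • b) := by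
        obtain rfl : t = 1 - s := by linarith
        simp only [line, ← Complex.coe_smul, smul_eq_mul, Complex.ofReal_sub, Complex.ofReal_one]
        module
      rwa [heq] at h
    have hg : AnalyticOnNhd ℂ (f ∘ line) V :=
      DifferentiableOn.analyticOnNhd
        (hf.comp hline.differentiableOn fun t ht => hrU ht) hV
    have h0 : line 0 = w := by simp [line]
    have h1 : line 1 = z := by simp [line]
    have hg0 : f ∘ line =ᶠ[𝓝 0] 0 := by
      have ht : Tendsto line (𝓝 0) (𝓝 w) := h0 ▸ hline.continuous.tendsto 0
      exact ht.eventually hw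
    have h := hg.eqOn_zero_of_preconnected_of_eventuallyEq_zero hVc.isPreconnected
      (show line 0 ∈ ball y r by rwa [h0, mem_ball, dist_comm]) hg0
      (show line 1 ∈ ball y r by rwa [h1])
    simpa [h1] using h
  exact fun y hy => (hsub hy).self_of_nhds

/-- Directional derivatives of a Fréchet-holomorphic function are continuous. -/
theorem DifferentiableOn.continuousOn_lineDeriv
    {E : Type*} [NormedAddCommGroup E] [NormedSpace ℂ E] {f : E → ℂ} {U : Set E}
    (hf : DifferentiableOn ℂ f U) (hU : IsOpen U) (v : E) :
    ContinuousOn (fun x => lineDeriv ℂ f x v) U := by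
  intro p hp
  refine ContinuousAt.continuousWithinAt ?_
  obtain ⟨r, hr, hrU⟩ := Metric.isOpen_iff.mp hU p hp
  obtain ⟨R, hR, hRv⟩ : ∃ R > 0, R * ‖v‖ < r / 2 := by
    refine ⟨r / 2 / (‖v‖ + 1), by positivity, ?_⟩
    rw [div_mul_eq_mul_div, div_lt_iff₀ (by positivity)]
    nlinarith [norm_nonneg v]
  have hmem : ∀ q ∈ ball p (r / 2), ∀ z ∈ closedBall (0 : ℂ) R, q + z • v ∈ U := by
    intro q hq z hz
    apply hrU
    rw [mem_ball_iff_norm] at hq ⊢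
    rw [mem_closedBall_zero_iff] at hz
    calc ‖q + z • v - p‖ = ‖(q - p) + z • v‖ := by congr 1; abel
      _ ≤ ‖q - p‖ + ‖z‖ * ‖v‖ := (norm_add_le _ _).trans_eq (by rw [norm_smul])
      _ ≤ ‖q - p‖ + R * ‖v‖ := by gcongr
      _ < r := by linarith
  have hd : ∀ q ∈ ball p (r / 2), ∀ z ∈ closedBall (0 : ℂ) R,
      DifferentiableAt ℂ (fun t : ℂ => f (q + t • v)) z := fun q hq z hz =>
    (hf.differentiableAt (hU.mem_nhds (hmem q hq z hz))).comp z (by fun_prop)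
  have hpb : p ∈ ball p (r / 2) := mem_ball_self (by positivity)
  rw [Metric.continuousAt_iff']
  intro ε hε
  obtain ⟨N, hN, hNf⟩ := (isCompact_closedBall (0 : ℂ) R).mem_uniformity_of_prod
    (f := fun q z => f (q + z • v)) (s := ball p (r / 2)) (q := p)
    (hf.continuousOn.comp (f := fun y : E × ℂ => y.1 + y.2 • v) (by fun_prop)
      fun y hy => hmem y.1 hy.1 y.2 hy.2)
    hpb (Metric.dist_mem_uniformity (show 0 < ε / 2 * R by positivity))
  rw [isOpen_ball.nhdsWithin_eq hpb] at hN
  filter_upwards [hN, ball_mem_nhds p (half_pos hr)] with q hqN hq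
  have h0 : (0 : ℂ) ∈ closedBall (0 : ℂ) R := mem_closedBall_self hR.le
  have hbound := Complex.norm_deriv_le_of_forall_mem_sphere_norm_le (c := 0) hR
    (f := fun t : ℂ => f (q + t • v) - f (p + t • v)) (C := ε / 2 * R)
    (DifferentiableOn.diffContOnCl fun z hz =>
      have hz' := closure_ball_subset_closedBall hz
      ((hd q hq z hz').sub (hd p hpb z hz')).differentiableWithinAt)
    fun z hz => by
      have h := hNf q hqN z (sphere_subset_closedBall hz)
      rw [mem_ofPred_eq, dist_eq_norm] at h
      exact h.le
  rw [deriv_fun_sub (hd q hq 0 h0) (hd p hpb 0 h0), mul_div_cancel_right₀ _ hR.ne'] at hbound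
  rw [dist_eq_norm]
  exact hbound.trans_lt (half_lt_self hε)

theorem d3_eq_lineDeriv (f : ℂ × ℂ × ℂ → ℂ) (x : ℂ × ℂ × ℂ) :
    d3 f x = lineDeriv ℂ f x (0, 0, 1) := by
  obtain ⟨a, b, c⟩ := x
  have h := deriv_comp_const_add (fun z => f (a, b, z)) c 0
  simpa [d3, lineDeriv] using h.symm

theorem DifferentiableAt.hasDerivAt_d3 {f : ℂ × ℂ × ℂ → ℂ} {x : ℂ × ℂ × ℂ}
    (hf : DifferentiableAt ℂ f x) :
    HasDerivAt (fun z => f (x.1, x.2.1, z)) (d3 f x) x.2.2 :=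
  (DifferentiableAt.comp x.2.2 (f := fun z : ℂ => (x.1, x.2.1, z)) hf
    (by fun_prop)).hasDerivAt

/-- if an integrable 1-form `ω = (A₁, A₂, 0)` annihilates `X_{P,Q}`,
then `P/Q` does not depend on the third variable. -/
theorem stmt_3 (U : Set (ℂ × ℂ × ℂ)) (hU : IsOpen U) (hUconn : IsConnected U)
    (P Q A₁ A₂ : ℂ × ℂ × ℂ → ℂ)
    (hP : DifferentiableOn ℂ P U) (hQ : DifferentiableOn ℂ Q U)
    (hA₁ : DifferentiableOn ℂ A₁ U) (hA₂ : DifferentiableOn ℂ A₂ U)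
    (hQne : ¬ (∀ x ∈ U, Q x = 0))
    (hA₂ne : ¬ (∀ x ∈ U, A₂ x = 0))
    (htan : ∀ x ∈ U, x.2.1 * Q x * A₁ x + P x * A₂ x = 0)
    (hint : ∀ x ∈ U, A₂ x * d3 A₁ x - A₁ x * d3 A₂ x = 0) :
    ∀ x ∈ U, Q x * d3 P x - P x * d3 Q x = 0 := by
  have hd3 : ∀ f : ℂ × ℂ × ℂ → ℂ, DifferentiableOn ℂ f U → ContinuousOn (d3 f) U :=
    fun f hf => (hf.continuousOn_lineDeriv hU (0, 0, 1)).congr fun x _ => d3_eq_lineDeriv f x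
  have hgood : ∀ x ∈ U, A₂ x ≠ 0 → Q x * d3 P x - P x * d3 Q x = 0 := by
    intro x hx hne
    have hxU := hU.mem_nhds hx
    have hderiv := (((hQ.differentiableAt hxU).hasDerivAt_d3.const_mul x.2.1).mul
      (hA₁.differentiableAt hxU).hasDerivAt_d3).add
      ((hP.differentiableAt hxU).hasDerivAt_d3.mul (hA₂.differentiableAt hxU).hasDerivAt_d3)
    have hslice : Tendsto (fun z : ℂ => (x.1, x.2.1, z)) (𝓝 x.2.2) (𝓝 x) :=
      Continuous.tendsto (by fun_prop) x.2.2
    have htan' := hderiv.unique ((hasDerivAt_const x.2.2 (0 : ℂ)).congr_of_eventuallyEq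
      ((hslice.eventually hxU).mono fun z hz => htan _ hz))
    simp only [Prod.mk.eta] at htan'
    refine (mul_eq_zero.mp ?_).resolve_left (pow_ne_zero 2 hne)
    linear_combination A₂ x * Q x * htan' - (A₂ x * d3 Q x + Q x * d3 A₂ x) * htan x hx
      - x.2.1 * Q x ^ 2 * hint x hx
  intro x hx
  by_contra hne
  have hcont : ContinuousAt (fun y => Q y * d3 P y - P y * d3 Q y) x :=
    ((hQ.continuousOn.mul (hd3 P hP)).sub (hP.continuousOn.mul (hd3 Q hQ))).continuousAt
      (hU.mem_nhds hx)
  refine hA₂ne (hA₂.eqOn_zero_of_isPreconnected_of_eventuallyEq_zero hU hUconn.isPreconnected hx ?_)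
  filter_upwards [hcont.eventually_ne hne, hU.mem_nhds hx] with y hy hyU
  by_contra h
  exact hy (hgood y hyU h)
end

section
/- Let U ⊆ ℂ³ be a connected open set and P, Q, A₂, A₃ : U → ℂ holomorphic, with Q not identically zero and A₂ not identically zero on U. Assume the tangency identity P·A₂ + Q·A₃ = 0 holds on U (this is ω(X_{P,Q}) = 0 for ω with first coefficient A₁ ≡ 0), and assume the integrability identity for ω = (0, A₂, A₃), namely A₃·∂₁A₂ − A₂·∂₁A₃ = 0 on U. Then Q·∂₁P − P·∂₁Q = 0 on U; i.e. the quotient P/Q does not depend on the variable x₁ wherever it is defined. -/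
open Set Filter Topology in
/-- Identity theorem for Fréchet-holomorphic functions: reduces to one variable along lines. -/
theorem DifferentiableOn.eq_zero_of_preconnected_of_eventuallyEq_zero {E : Type*}
    [NormedAddCommGroup E] [NormedSpace ℂ E] {f : E → ℂ} {U : Set E} (hU : IsOpen U)
    (hUc : IsPreconnected U) (hf : DifferentiableOn ℂ f U) {w : E} (hw : w ∈ U)
    (h : f =ᶠ[𝓝 w] 0) : ∀ x ∈ U, f x = 0 := by
  have hball : ∀ (c z : E) (r : ℝ), Metric.ball c r ⊆ U → z ∈ Metric.ball c r →
      f =ᶠ[𝓝 z] 0 → ∀ x ∈ Metric.ball c r, f x = 0 := by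
    intro c z r hr hz hfz x hx
    let L : ℂ → E := fun t => z + t • (x - z)
    have hL : Differentiable ℂ L := by fun_prop
    have hLc : Continuous L := hL.continuous
    have hconv : Convex ℝ (L ⁻¹' Metric.ball c r) := by
      intro s hs t ht a b ha hb hab
      have hcomb := convex_ball c r hs ht ha hb hab
      have hLcomb : L (a • s + b • t) = a • L s + b • L t := by
        simp only [L, smul_add, add_smul, smul_assoc]
        have hz1 : z = a • z + b • z := by rw [← add_smul, hab, one_smul]
        nth_rewrite 1 [hz1]
        abel
      rwa [← hLcomb] at hcomb
    have hdiff : DifferentiableOn ℂ (f ∘ L) (L ⁻¹' Metric.ball c r) :=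
      (hf.mono hr).comp hL.differentiableOn (mapsTo_preimage _ _)
    have h0 : L 0 = z := by simp [L]
    have h1 : L 1 = x := by simp [L]
    have hev : f ∘ L =ᶠ[𝓝 0] 0 := by
      have ht : Tendsto L (𝓝 0) (𝓝 z) := by simpa [h0] using hLc.tendsto 0
      exact ht.eventually hfz
    have hana := hdiff.analyticOnNhd (Metric.isOpen_ball.preimage hLc)
    have := hana.eqOn_zero_of_preconnected_of_eventuallyEq_zero hconv.isPreconnected (z₀ := 0)
      (by simpa [h0] using hz) hev
      (show (1 : ℂ) ∈ L ⁻¹' Metric.ball c r by simpa [h1] using hx)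
    simpa [h1] using this
  have hsub : U ⊆ {x | f =ᶠ[𝓝 x] 0} := by
    refine hUc.subset_of_closure_inter_subset isOpen_setOfPred_eventually_nhds ⟨w, hw, h⟩ ?_
    rintro c ⟨hc, hcU⟩
    obtain ⟨r, hr0, hr⟩ := Metric.isOpen_iff.1 hU c hcU
    obtain ⟨z, hz, hcz⟩ := Metric.mem_closure_iff.1 hc r hr0
    exact eventually_of_mem (Metric.ball_mem_nhds c hr0)
      (hball c z r hr (by rwa [Metric.mem_ball, dist_comm]) hz)
  exact fun x hx => (hsub hx).self_of_nhds

open Set Filter Topology in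
/-- If `a`, `b` have vanishing Wronskian and `p * a + q * b = 0` with `a` not identically zero,
then `p` and `q` are proportional. -/
theorem mul_eq_mul_of_wronskian_eq_zero {D : Set ℂ} (hD : IsOpen D) (hDc : IsPreconnected D)
    {p q a b : ℂ → ℂ} (hp : DifferentiableOn ℂ p D) (hq : DifferentiableOn ℂ q D)
    (ha : DifferentiableOn ℂ a D) (hb : DifferentiableOn ℂ b D)
    (htan : ∀ z ∈ D, p z * a z + q z * b z = 0)
    (hwr : ∀ z ∈ D, b z * deriv a z - a z * deriv b z = 0)
    {w : ℂ} (hw : w ∈ D) (haw : a w ≠ 0) {z z' : ℂ} (hz : z ∈ D) (hz' : z' ∈ D) :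
    p z * q z' = p z' * q z := by
  have hev : ∀ᶠ t in 𝓝 w, t ∈ D ∧ a t ≠ 0 :=
    (hD.eventually_mem hw).and ((ha.continuousOn.continuousAt (hD.mem_nhds hw)).eventually_ne haw)
  obtain ⟨r, hr0, hr⟩ := Metric.eventually_nhds_iff_ball.1 hev
  have hder : ∀ t ∈ Metric.ball w r, HasDerivAt (fun t => b t / a t) 0 t := by
    intro t ht
    obtain ⟨htD, hat⟩ := hr t ht
    have hA := (ha.differentiableAt (hD.mem_nhds htD)).hasDerivAt
    have hB := (hb.differentiableAt (hD.mem_nhds htD)).hasDerivAt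
    have hnum : deriv b t * a t - b t * deriv a t = 0 := by linear_combination -hwr t htD
    have hdiv := hB.fun_div hA hat
    rwa [hnum, zero_div] at hdiv
  have hconst : ∀ t ∈ Metric.ball w r, b t / a t = b w / a w := by
    intro t ht
    exact Metric.isOpen_ball.is_const_of_deriv_eq_zero (convex_ball w r).isPreconnected
      (fun s hs => (hder s hs).differentiableAt.differentiableWithinAt)
      (fun s hs => (hder s hs).deriv) ht (Metric.mem_ball_self hr0)
  have hprop : (fun t => p t + b w / a w * q t) =ᶠ[𝓝 w] 0 := by
    filter_upwards [Metric.ball_mem_nhds w hr0] with t ht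
    obtain ⟨htD, hat⟩ := hr t ht
    have hbt : b t = b w / a w * a t := by rw [← hconst t ht, div_mul_cancel₀ _ hat]
    have hmul := htan t htD
    rw [hbt] at hmul
    refine (mul_eq_zero.1 (?_ : (p t + b w / a w * q t) * a t = 0)).resolve_right hat
    linear_combination hmul
  have hall := DifferentiableOn.eq_zero_of_preconnected_of_eventuallyEq_zero hD hDc
    (hp.add (hq.const_mul (b w / a w))) hw hprop
  have e1 : p z + b w / a w * q z = 0 := hall z hz
  have e2 : p z' + b w / a w * q z' = 0 := hall z' hz'
  linear_combination q z' * e1 - q z * e2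

open Filter Topology in
/-- if an integrable 1-form `ω = (0, A₂, A₃)` annihilates `X_{P,Q}`,
then `P/Q` does not depend on the first variable. -/
theorem stmt_5 (U : Set (ℂ × ℂ × ℂ)) (hU : IsOpen U) (hUconn : IsConnected U)
    (P Q A₂ A₃ : ℂ × ℂ × ℂ → ℂ)
    (hP : DifferentiableOn ℂ P U) (hQ : DifferentiableOn ℂ Q U)
    (hA₂ : DifferentiableOn ℂ A₂ U) (hA₃ : DifferentiableOn ℂ A₃ U)
    (hQne : ¬ (∀ x ∈ U, Q x = 0))
    (hA₂ne : ¬ (∀ x ∈ U, A₂ x = 0))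
    (htan : ∀ x ∈ U, P x * A₂ x + Q x * A₃ x = 0)
    (hint : ∀ x ∈ U, A₃ x * d1 A₂ x - A₂ x * d1 A₃ x = 0) :
    ∀ x ∈ U, Q x * d1 P x - P x * d1 Q x = 0 := by
  intro x hx
  obtain ⟨r, hr0, hr⟩ := Metric.isOpen_iff.1 hU x hx
  have hmem : ∀ z ∈ Metric.ball x.1 r, ∀ y ∈ Metric.ball x.2 r, (z, y) ∈ U := fun z hz y hy =>
    hr (by rw [← ball_prod_same x.1 x.2 r]; exact ⟨hz, hy⟩)
  have hslice : ∀ f : ℂ × ℂ × ℂ → ℂ, DifferentiableOn ℂ f U → ∀ y ∈ Metric.ball x.2 r,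
      DifferentiableOn ℂ (fun z => f (z, y)) (Metric.ball x.1 r) := fun f hf y hy =>
    hf.comp (by fun_prop) fun z hz => hmem z hz y hy
  have hprop : ∀ z ∈ Metric.ball x.1 r, P (z, x.2) * Q x = P x * Q (z, x.2) := by
    intro z hz
    by_contra hne
    have hx1 := Metric.mem_ball_self (x := x.1) hr0
    have hx2 := Metric.mem_ball_self (x := x.2) hr0
    have hcont : ∀ f : ℂ × ℂ × ℂ → ℂ, DifferentiableOn ℂ f U → ∀ t ∈ Metric.ball x.1 r,
        ContinuousAt (fun y => f (t, y)) x.2 := fun f hf t ht =>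
      ContinuousAt.comp (g := f) (f := fun y => (t, y))
        (hf.continuousOn.continuousAt (hU.mem_nhds (hmem t ht x.2 hx2))) (by fun_prop)
    have hneq : ∀ᶠ y in 𝓝 x.2, P (z, y) * Q (x.1, y) ≠ P (x.1, y) * Q (z, y) :=
      ((((hcont P hP z hz).mul (hcont Q hQ x.1 hx1)).sub
        ((hcont P hP x.1 hx1).mul (hcont Q hQ z hz))).eventually_ne (sub_ne_zero.2 hne)).mono
        fun _ => sub_ne_zero.1
    have hzero : ∀ᶠ y in 𝓝 x.2, ∀ t ∈ Metric.ball x.1 r, A₂ (t, y) = 0 := by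
      filter_upwards [hneq, Metric.ball_mem_nhds x.2 hr0] with y hy hyr t ht
      by_contra hA
      exact hy (mul_eq_mul_of_wronskian_eq_zero Metric.isOpen_ball
        (convex_ball x.1 r).isPreconnected (hslice P hP y hyr) (hslice Q hQ y hyr)
        (hslice A₂ hA₂ y hyr) (hslice A₃ hA₃ y hyr)
        (fun s hs => htan _ (hmem s hs y hyr)) (fun s hs => hint _ (hmem s hs y hyr))
        ht hA hz hx1)
    refine hA₂ne (hA₂.eq_zero_of_preconnected_of_eventuallyEq_zero hU hUconn.isPreconnected hx ?_)
    have hprod : ∀ᶠ s in 𝓝 x.1 ×ˢ 𝓝 x.2, A₂ s = 0 := by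
      filter_upwards [(show ∀ᶠ t in 𝓝 x.1, t ∈ Metric.ball x.1 r from
        Metric.ball_mem_nhds x.1 hr0).prod_mk hzero] with s hs
      exact hs.2 s.1 hs.1
    rwa [← nhds_prod_eq] at hprod
  have hderiv : deriv (fun z => P (z, x.2) * Q x) x.1 = deriv (fun z => P x * Q (z, x.2)) x.1 :=
    EventuallyEq.deriv_eq (eventually_of_mem (Metric.ball_mem_nhds x.1 hr0) hprop)
  rw [deriv_mul_const_field, deriv_const_mul_field] at hderiv
  change Q x * deriv (fun z => P (z, x.2)) x.1 - P x * deriv (fun z => Q (z, x.2)) x.1 = 0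
  linear_combination hderiv
end

section
/- Let T ⊆ ℂ be open and a, b, c : T → ℂ holomorphic. On U := ℂ² × T with coordinates (x₁,x₂,x₃), define the vector field X = (x₂·a(x₃), −(b(x₃)·x₂ + c(x₃)·x₁), a(x₃)) (associated with the linear second-order ODE a(t)u'' + b(t)u' + c(t)u = 0) and the 1-form ω with coefficients (−a(x₃)·x₂, a(x₃)·x₁, a(x₃)·x₂² + b(x₃)·x₁x₂ + c(x₃)·x₁²). Then ω(X) = 0 at every point of U, and ω satisfies the integrability identity A₁(∂₂A₃ − ∂₃A₂) + A₂(∂₃A₁ − ∂₁A₃) + A₃(∂₁A₂ − ∂₂A₁) = 0 on U. (Thus every linear second-order ODE admits a 2-flag of foliations.) -/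
/-- every linear second-order ODE `a(t)u'' + b(t)u' + c(t)u = 0` admits a
2-flag: the stated 1-form annihilates the associated vector field and is integrable. -/
theorem stmt_13 (T : Set ℂ) (hT : IsOpen T) (a b c : ℂ → ℂ)
    (ha : DifferentiableOn ℂ a T) (hb : DifferentiableOn ℂ b T)
    (hc : DifferentiableOn ℂ c T) :
    let U : Set (ℂ × ℂ × ℂ) := {x | x.2.2 ∈ T}
    let X₁ : ℂ × ℂ × ℂ → ℂ := fun x => x.2.1 * a x.2.2
    let X₂ : ℂ × ℂ × ℂ → ℂ := fun x => -(b x.2.2 * x.2.1 + c x.2.2 * x.1)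
    let X₃ : ℂ × ℂ × ℂ → ℂ := fun x => a x.2.2
    let A₁ : ℂ × ℂ × ℂ → ℂ := fun x => -(a x.2.2 * x.2.1)
    let A₂ : ℂ × ℂ × ℂ → ℂ := fun x => a x.2.2 * x.1
    let A₃ : ℂ × ℂ × ℂ → ℂ := fun x =>
      a x.2.2 * x.2.1 ^ 2 + b x.2.2 * (x.1 * x.2.1) + c x.2.2 * x.1 ^ 2
    (∀ x ∈ U, A₁ x * X₁ x + A₂ x * X₂ x + A₃ x * X₃ x = 0) ∧
    (∀ x ∈ U, wedgeCoeff A₁ A₂ A₃ x = 0) := by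
  intro U X₁ X₂ X₃ A₁ A₂ A₃
  refine ⟨fun x _ => by simp only [A₁, A₂, A₃, X₁, X₂, X₃]; ring, ?_⟩
  rintro ⟨x, y, t⟩ -
  have h₁₂ : d2 A₁ (x, y, t) = -a t := by
    simp [d2, A₁]
  have h₁₃ : d3 A₁ (x, y, t) = -(deriv a t * y) := by
    simp [d3, A₁]
  have h₂₁ : d1 A₂ (x, y, t) = a t := by
    simp [d1, A₂]
  have h₂₃ : d3 A₂ (x, y, t) = deriv a t * x := by
    simp [d3, A₂]
  have h₃₁ : d1 A₃ (x, y, t) = b t * y + c t * (2 * x) := by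
    have h := ((((hasDerivAt_id x).mul_const y).const_mul (b t)).const_add
      (a t * y ^ 2)).add (((hasDerivAt_id x).pow 2).const_mul (c t))
    refine h.deriv.trans ?_
    simp
  have h₃₂ : d2 A₃ (x, y, t) = a t * (2 * y) + b t * x := by
    have h := ((((hasDerivAt_id y).pow 2).const_mul (a t)).add
      (((hasDerivAt_id y).const_mul x).const_mul (b t))).add_const (c t * x ^ 2)
    refine h.deriv.trans ?_
    simp
  rw [wedgeCoeff, h₁₂, h₁₃, h₂₁, h₂₃, h₃₁, h₃₂]
  simp only [A₁, A₂, A₃]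
  ring
end

section
/- Let k ∈ ℂ and let n ≥ 1, s ≥ 1 be integers; set m := −s (so m < 0, as in the Emden–Fowler equation u'' = k·t^m·uⁿ with m < 0 < n). On ℂ³ with coordinates (x₁,x₂,x₃) define the polynomial vector field X = (x₂·x₃^s, k·x₁ⁿ, x₃^s) and the polynomial 1-form ω with coefficients A₁ = −((n−1)·k·x₁ⁿ·x₃ + (m+n+1)·x₂·x₃^s), A₂ = x₃^s·((n−1)·x₂·x₃ + (m+2)·x₁), A₃ = −(k·(m+2)·x₁^{n+1} − (m+n+1)·x₂²·x₃^s), where the integers n−1, m+n+1, m+2 are regarded as elements of ℂ. Then ω(X) = 0 at every point of ℂ³, and ω satisfies the integrability identity A₁(∂₂A₃ − ∂₃A₂) + A₂(∂₃A₁ − ∂₁A₃) + A₃(∂₁A₂ − ∂₂A₁) = 0 on ℂ³. -/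
/-- the Emden–Fowler equation `u'' = k·t^m·uⁿ` with `m = −s < 0 < n`
admits a 2-flag: the stated polynomial 1-form annihilates the associated polynomial
vector field `X = (x₂·x₃ˢ, k·x₁ⁿ, x₃ˢ)` and is integrable on all of ℂ³. -/
theorem stmt_14 (k : ℂ) (n s : ℕ) (hn : 1 ≤ n) (hs : 1 ≤ s)
    (m : ℤ) (hm : m = -(s : ℤ)) :
    let X₁ : ℂ × ℂ × ℂ → ℂ := fun x => x.2.1 * x.2.2 ^ s
    let X₂ : ℂ × ℂ × ℂ → ℂ := fun x => k * x.1 ^ n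
    let X₃ : ℂ × ℂ × ℂ → ℂ := fun x => x.2.2 ^ s
    let A₁ : ℂ × ℂ × ℂ → ℂ := fun x =>
      -(((n : ℂ) - 1) * k * x.1 ^ n * x.2.2
        + ((m + (n : ℤ) + 1 : ℤ) : ℂ) * x.2.1 * x.2.2 ^ s)
    let A₂ : ℂ × ℂ × ℂ → ℂ := fun x =>
      x.2.2 ^ s * (((n : ℂ) - 1) * x.2.1 * x.2.2 + ((m + 2 : ℤ) : ℂ) * x.1)
    let A₃ : ℂ × ℂ × ℂ → ℂ := fun x =>
      -(k * ((m + 2 : ℤ) : ℂ) * x.1 ^ (n + 1)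
        - ((m + (n : ℤ) + 1 : ℤ) : ℂ) * x.2.1 ^ 2 * x.2.2 ^ s)
    (∀ x : ℂ × ℂ × ℂ, A₁ x * X₁ x + A₂ x * X₂ x + A₃ x * X₃ x = 0) ∧
    (∀ x : ℂ × ℂ × ℂ, wedgeCoeff A₁ A₂ A₃ x = 0) := by
  intro X₁ X₂ X₃ A₁ A₂ A₃
  obtain ⟨t, rfl⟩ : ∃ t, s = t + 1 := ⟨s - 1, by omega⟩
  subst hm
  refine ⟨fun x => ?_, fun ⟨x, y, z⟩ => ?_⟩
  · simp only [A₁, A₂, A₃, X₁, X₂, X₃]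
    ring
  have hpow (j : ℕ) (w : ℂ) : HasDerivAt (fun v : ℂ => v ^ (j + 1)) ((j + 1) * w ^ j) w := by
    simpa using hasDerivAt_pow (j + 1) w
  have h₂₃ := ((((hasDerivAt_pow 2 y).const_mul
    ((-((t + 1 : ℕ) : ℤ) + (n : ℤ) + 1 : ℤ) : ℂ)).mul_const (z ^ (t + 1))).const_sub
    (k * ((-((t + 1 : ℕ) : ℤ) + 2 : ℤ) : ℂ) * x ^ (n + 1))).neg
  have h₃₂ := (hpow t z).mul (((hasDerivAt_id z).const_mul (((n : ℂ) - 1) * y)).add_const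
    (((-((t + 1 : ℕ) : ℤ) + 2 : ℤ) : ℂ) * x))
  have h₃₁ := (((hasDerivAt_id z).const_mul (((n : ℂ) - 1) * k * x ^ n)).add
    ((hpow t z).const_mul (((-((t + 1 : ℕ) : ℤ) + (n : ℤ) + 1 : ℤ) : ℂ) * y))).neg
  have h₁₃ := (((hpow n x).const_mul (k * ((-((t + 1 : ℕ) : ℤ) + 2 : ℤ) : ℂ))).sub_const
    (((-((t + 1 : ℕ) : ℤ) + (n : ℤ) + 1 : ℤ) : ℂ) * y ^ 2 * z ^ (t + 1))).neg
  have h₁₂ := (((hasDerivAt_id x).const_mul ((-((t + 1 : ℕ) : ℤ) + 2 : ℤ) : ℂ)).const_add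
    (((n : ℂ) - 1) * y * z)).const_mul (z ^ (t + 1))
  have h₂₁ := ((((hasDerivAt_id y).const_mul
    ((-((t + 1 : ℕ) : ℤ) + (n : ℤ) + 1 : ℤ) : ℂ)).mul_const (z ^ (t + 1))).const_add
    (((n : ℂ) - 1) * k * x ^ n * z)).neg
  have e₂₃ : d2 A₃ (x, y, z) = _ := h₂₃.deriv
  have e₃₂ : d3 A₂ (x, y, z) = _ := h₃₂.deriv
  have e₃₁ : d3 A₁ (x, y, z) = _ := h₃₁.deriv
  have e₁₃ : d1 A₃ (x, y, z) = _ := h₁₃.deriv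
  have e₁₂ : d1 A₂ (x, y, z) = _ := h₁₂.deriv
  have e₂₁ : d2 A₁ (x, y, z) = _ := h₂₁.deriv
  rw [wedgeCoeff, e₂₃, e₃₂, e₃₁, e₁₃, e₁₂, e₂₁]
  simp only [A₁, A₂, A₃, id]
  push_cast
  ring
end

section
/- Let V ⊆ ℂ² be open and f : V → ℂ holomorphic, and set U := {(x₁,x₂,x₃) ∈ ℂ³ : (x₁, x₂·x₃) ∈ V} and F(x₁,x₂,x₃) := f(x₁, x₂·x₃). Define on U the vector field X = (x₁x₂x₃, −x₂·F(x), x₁x₃) (associated with the second-order ODE u'' = −u'·f(u, t·u')/(t·u)) and the 1-form ω with coefficients (F(x) − x₁, x₁x₃, x₁x₂). Then ω(X) = 0 at every point of U, and ω satisfies the integrability identity A₁(∂₂A₃ − ∂₃A₂) + A₂(∂₃A₁ − ∂₁A₃) + A₃(∂₁A₂ − ∂₂A₁) = 0 on U. -/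
/-- for any holomorphic `f` on `V ⊆ ℂ²`, with `F(x) = f(x₁, x₂x₃)`, the
1-form `ω = (F − x₁, x₁x₃, x₁x₂)` annihilates the vector field
`X = (x₁x₂x₃, −x₂·F, x₁x₃)` (associated with `u'' = −u'·f(u, t·u')/(t·u)`) and is
integrable on `U = {x : (x₁, x₂x₃) ∈ V}`. -/
theorem stmt_15 (V : Set (ℂ × ℂ)) (hV : IsOpen V) (f : ℂ × ℂ → ℂ)
    (hf : DifferentiableOn ℂ f V) :
    let U : Set (ℂ × ℂ × ℂ) := {x | (x.1, x.2.1 * x.2.2) ∈ V}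
    let F : ℂ × ℂ × ℂ → ℂ := fun x => f (x.1, x.2.1 * x.2.2)
    let X₁ : ℂ × ℂ × ℂ → ℂ := fun x => x.1 * x.2.1 * x.2.2
    let X₂ : ℂ × ℂ × ℂ → ℂ := fun x => -(x.2.1 * F x)
    let X₃ : ℂ × ℂ × ℂ → ℂ := fun x => x.1 * x.2.2
    let A₁ : ℂ × ℂ × ℂ → ℂ := fun x => F x - x.1
    let A₂ : ℂ × ℂ × ℂ → ℂ := fun x => x.1 * x.2.2
    let A₃ : ℂ × ℂ × ℂ → ℂ := fun x => x.1 * x.2.1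
    (∀ x ∈ U, A₁ x * X₁ x + A₂ x * X₂ x + A₃ x * X₃ x = 0) ∧
    (∀ x ∈ U, wedgeCoeff A₁ A₂ A₃ x = 0) := by
  intro U F X₁ X₂ X₃ A₁ A₂ A₃
  refine ⟨fun x _ => by simp only [A₁, A₂, A₃, X₁, X₂, X₃]; ring, ?_⟩
  rintro ⟨a, b, c⟩ hx
  have hg : DifferentiableAt ℂ (fun w => f (a, w)) (b * c) :=
    (hf.differentiableAt (hV.mem_nhds hx)).comp (b * c)
      ((differentiableAt_const a).prodMk differentiableAt_id)
  have hA₁₂ : d2 A₁ (a, b, c) = deriv (fun w => f (a, w)) (b * c) * c :=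
    ((HasDerivAt.comp (h₂ := fun w => f (a, w)) b hg.hasDerivAt
      (hasDerivAt_mul_const c)).sub_const a).deriv
  have hA₁₃ : d3 A₁ (a, b, c) = deriv (fun w => f (a, w)) (b * c) * b :=
    ((HasDerivAt.comp (h₂ := fun w => f (a, w)) c hg.hasDerivAt
      (hasDerivAt_const_mul b)).sub_const a).deriv
  have hA₂₁ : d1 A₂ (a, b, c) = c := (hasDerivAt_mul_const c).deriv
  have hA₂₃ : d3 A₂ (a, b, c) = a := (hasDerivAt_const_mul a).deriv
  have hA₃₁ : d1 A₃ (a, b, c) = b := (hasDerivAt_mul_const b).deriv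
  have hA₃₂ : d2 A₃ (a, b, c) = a := (hasDerivAt_const_mul a).deriv
  rw [wedgeCoeff, hA₁₂, hA₁₃, hA₂₁, hA₂₃, hA₃₁, hA₃₂]
  simp only [A₁, A₂, A₃]
  ring
end

section
/- On ℂ³ with coordinates (x₁,x₂,x₃), define the linear vector field Y = (x₁, x₂, x₃) and the 1-form ω with coefficients (x₂x₃, x₁x₃, −2x₁x₂). Then: (a) ω(Y) = 0 at every point and ω satisfies the integrability identity on ℂ³, so (Y, ω) determines a 2-flag of holomorphic foliations; (b) the singular-set inclusion fails for this flag: there exists a point p (e.g. p = (1,0,0)) with ω(p) = 0 but Y(p) ≠ 0; and (c) the vector field X = (x₁x₂x₃, −(x₂²x₃ − 2x₁x₂), x₁x₃), which has the form (x₂·Q, P, Q) with Q = x₁x₃ and P = −(x₂²x₃ − 2x₁x₂), satisfies ω(X) = 0 at every point, and every zero of ω is a zero of X: if x₂x₃ = x₁x₃ = x₁x₂ = 0 at p then X(p) = 0. -/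
/-- the flag given by `Y = (x₁, x₂, x₃)` and
`ω = (x₂x₃, x₁x₃, −2x₁x₂)` is a 2-flag of foliations for which the singular-set
inclusion fails, whereas the vector field `X = (x₂·Q, P, Q)` with `Q = x₁x₃`,
`P = −(x₂²x₃ − 2x₁x₂)` is tangent to `ω` and every zero of `ω` is a zero of `X`. -/
theorem stmt_19 :
    let A₁ : ℂ × ℂ × ℂ → ℂ := fun x => x.2.1 * x.2.2
    let A₂ : ℂ × ℂ × ℂ → ℂ := fun x => x.1 * x.2.2
    let A₃ : ℂ × ℂ × ℂ → ℂ := fun x => -(2 * (x.1 * x.2.1))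
    let Y₁ : ℂ × ℂ × ℂ → ℂ := fun x => x.1
    let Y₂ : ℂ × ℂ × ℂ → ℂ := fun x => x.2.1
    let Y₃ : ℂ × ℂ × ℂ → ℂ := fun x => x.2.2
    let Q : ℂ × ℂ × ℂ → ℂ := fun x => x.1 * x.2.2
    let P : ℂ × ℂ × ℂ → ℂ := fun x => -(x.2.1 ^ 2 * x.2.2 - 2 * (x.1 * x.2.1))
    let X₁ : ℂ × ℂ × ℂ → ℂ := fun x => x.2.1 * Q x
    let X₂ : ℂ × ℂ × ℂ → ℂ := fun x => P x
    let X₃ : ℂ × ℂ × ℂ → ℂ := fun x => Q x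
    (∀ x : ℂ × ℂ × ℂ, A₁ x * Y₁ x + A₂ x * Y₂ x + A₃ x * Y₃ x = 0) ∧
    (∀ x : ℂ × ℂ × ℂ, wedgeCoeff A₁ A₂ A₃ x = 0) ∧
    (∃ p : ℂ × ℂ × ℂ, (A₁ p = 0 ∧ A₂ p = 0 ∧ A₃ p = 0) ∧
      ¬(Y₁ p = 0 ∧ Y₂ p = 0 ∧ Y₃ p = 0)) ∧
    (∀ x : ℂ × ℂ × ℂ, A₁ x * X₁ x + A₂ x * X₂ x + A₃ x * X₃ x = 0) ∧
    (∀ p : ℂ × ℂ × ℂ, A₁ p = 0 → A₂ p = 0 → A₃ p = 0 →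
      X₁ p = 0 ∧ X₂ p = 0 ∧ X₃ p = 0) := by
  intro A₁ A₂ A₃ Y₁ Y₂ Y₃ Q P X₁ X₂ X₃
  refine ⟨fun x => ?_, fun x => ?_, ⟨(1, 0, 0), ?_, ?_⟩, fun x => ?_, fun p h₁ h₂ h₃ => ?_⟩
  · simp only [A₁, A₂, A₃, Y₁, Y₂, Y₃]
    ring
  · have left (c z : ℂ) : deriv (fun w => c * w) z = c := by simp
    have right (c z : ℂ) : deriv (fun w => w * c) z = c := by simp
    have neg_left (c z : ℂ) : deriv (fun w => -(2 * (c * w))) z = -(2 * c) := by simp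
    have neg_right (c z : ℂ) : deriv (fun w => -(2 * (w * c))) z = -(2 * c) := by simp
    simp only [wedgeCoeff, d1, d2, d3, A₁, A₂, A₃]
    rw [neg_left, neg_right, left, left, right, right]
    ring
  · simp [A₁, A₂, A₃]
  · simp [Y₁]
  · simp only [A₁, A₂, A₃, X₁, X₂, X₃, P, Q]
    ring
  · simp only [A₁, A₂, A₃, X₁, X₂, X₃, P, Q] at *
    refine ⟨?_, ?_, h₂⟩
    · linear_combination p.2.1 * h₂
    · linear_combination -p.2.1 * h₁ - h₃
end
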